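/- arXiv:0707.0939 — 3 statements merged into one kernel-verified Lean document; each statement's English description precedes it below -/
import Mathlib

section
/- For an almost quaternion-Hermitian 4n-manifold M with n > 1, define ξ_X Y = −(1/4) Σ_{A=I,J,K} A(∇_X A)Y + (1/2) Σ_{A=I,J,K} λ_A(X) A Y. Then ∇^aqH = ∇ + ξ is the minimal Sp(n)Sp(1)-connection: (1) ∇^aqH is a metric connection (∇^aqH g = 0); (2) for any local adapted basis I,J,K one has (∇^aqH_X I)Y = λ_K(X) JY − λ_J(X) KY, together with the two equations obtained by cyclically permuting (I,J,K); (3) ξ takes values in T*M ⊗ (sp(n)+sp(1))^⊥, i.e. Σ_{A=I,J,K} A ξ_X (A Y) = ξ_X Y and Σ_i ⟨ξ_X e_i, A e_i⟩ = 0 for A = I,J,K and any local orthonormal frame (e_i). -/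
/-!  Synthetic (Koszul-style) model of an almost quaternion-Hermitian `4n`-manifold.

`C` plays the role of the commutative ℝ-algebra of smooth functions and `V` that of
the `C`-module of vector fields, equipped with a directional derivative `D`, a Lie
bracket, a Riemannian metric `g` together with its Levi-Civita connection `nab`
(characterised by being torsion-free and metric), a local adapted basis `I, J, K`
of anticommuting almost complex structures with `K = I J`, each compatible with the
metric, and a (local) orthonormal frame.  -/

noncomputable section

open scoped BigOperators

structure AQH (n : ℕ) (C : Type*) (V : Type*) [CommRing C] [Algebra ℝ C]
    [AddCommGroup V] [Module C V] where
  /-- derivative of a function along a vector field -/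
  D : V → C → C
  D_add : ∀ X f g, D X (f + g) = D X f + D X g
  D_mul : ∀ X f g, D X (f * g) = f * D X g + g * D X f
  D_const : ∀ X (r : ℝ), D X (algebraMap ℝ C r) = 0
  D_addX : ∀ X Y f, D (X + Y) f = D X f + D Y f
  D_smulX : ∀ (f : C) (X : V) (h : C), D (f • X) h = f * D X h
  /-- the Lie bracket of vector fields -/
  bracket : V → V → V
  bracket_skew : ∀ X Y, bracket X Y = -bracket Y X
  bracket_add : ∀ X Y Z, bracket X (Y + Z) = bracket X Y + bracket X Z
  bracket_smul : ∀ X (f : C) Y, bracket X (f • Y) = f • bracket X Y + (D X f) • Y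
  bracket_jacobi : ∀ X Y Z,
    bracket X (bracket Y Z) + bracket Y (bracket Z X) + bracket Z (bracket X Y) = 0
  D_bracket : ∀ X Y f, D (bracket X Y) f = D X (D Y f) - D Y (D X f)
  /-- the Riemannian metric -/
  g : V → V → C
  g_symm : ∀ X Y, g X Y = g Y X
  g_add : ∀ X Y Z, g (X + Y) Z = g X Z + g Y Z
  g_smul : ∀ (f : C) X Y, g (f • X) Y = f * g X Y
  /-- the Levi-Civita connection -/
  nab : V → V → V
  nab_addX : ∀ X Y Z, nab (X + Y) Z = nab X Z + nab Y Z
  nab_smulX : ∀ (f : C) X Y, nab (f • X) Y = f • nab X Y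
  nab_add : ∀ X Y Z, nab X (Y + Z) = nab X Y + nab X Z
  nab_leibniz : ∀ X (f : C) Y, nab X (f • Y) = f • nab X Y + (D X f) • Y
  torsion_free : ∀ X Y, nab X Y - nab Y X = bracket X Y
  nab_metric : ∀ X Y Z, D X (g Y Z) = g (nab X Y) Z + g Y (nab X Z)
  /-- the (local) adapted basis of almost complex structures -/
  I : V → V
  J : V → V
  K : V → V
  I_lin : ∀ (f : C) X Y, I (f • X + Y) = f • I X + I Y
  J_lin : ∀ (f : C) X Y, J (f • X + Y) = f • J X + J Y
  K_lin : ∀ (f : C) X Y, K (f • X + Y) = f • K X + K Y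
  I_sq : ∀ X, I (I X) = -X
  J_sq : ∀ X, J (J X) = -X
  K_def : ∀ X, K X = I (J X)
  anticomm : ∀ X, I (J X) = -J (I X)
  I_metric : ∀ X Y, g (I X) (I Y) = g X Y
  J_metric : ∀ X Y, g (J X) (J Y) = g X Y
  /-- a (local) orthonormal frame -/
  frame : Fin (4 * n) → V
  frame_orthonormal : ∀ i j, g (frame i) (frame j) = if i = j then 1 else 0
  frame_span : ∀ X, X = ∑ i, g X (frame i) • frame i

namespace AQH

section ops

variable {C V : Type*} [CommRing C]

/-- the operator `A_(1)` on covariant 3-tensors -/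
def op1 (A : V → V) (ψ : V → V → V → C) : V → V → V → C := fun X Y Z => -ψ (A X) Y Z

/-- the operator `A_(2)` on covariant 3-tensors -/
def op2 (A : V → V) (ψ : V → V → V → C) : V → V → V → C := fun X Y Z => -ψ X (A Y) Z

/-- the operator `A_(3)` on covariant 3-tensors -/
def op3 (A : V → V) (ψ : V → V → V → C) : V → V → V → C := fun X Y Z => -ψ X Y (A Z)

/-- the operator `A_(12) = A_(1) A_(2)` on covariant 3-tensors -/
def op12 (A : V → V) (ψ : V → V → V → C) : V → V → V → C := fun X Y Z => ψ (A X) (A Y) Z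

/-- the operator `A_(13) = A_(1) A_(3)` on covariant 3-tensors -/
def op13 (A : V → V) (ψ : V → V → V → C) : V → V → V → C := fun X Y Z => ψ (A X) Y (A Z)

/-- the operator `A_(23) = A_(2) A_(3)` on covariant 3-tensors -/
def op23 (A : V → V) (ψ : V → V → V → C) : V → V → V → C := fun X Y Z => ψ X (A Y) (A Z)

/-- the operator `𝓛_A = A_(12) + A_(13) + A_(23)` on three-forms -/
def calL (A : V → V) (ψ : V → V → V → C) : V → V → V → C :=
  fun X Y Z => op12 A ψ X Y Z + op13 A ψ X Y Z + op23 A ψ X Y Z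

/-- the action `(A ν)(X) = -ν (A X)` of `A` on a one-form -/
def act1 (A : V → V) (ν : V → C) : V → C := fun X => -ν (A X)

/-- the action `(A ψ)(X,Y,Z) = -ψ(AX,AY,AZ)` of `A` on a three-form -/
def act3 (A : V → V) (ψ : V → V → V → C) : V → V → V → C :=
  fun X Y Z => -ψ (A X) (A Y) (A Z)

/-- wedge product of two one-forms -/
def wedge11 (α β : V → C) : V → V → C := fun X Y => α X * β Y - α Y * β X

/-- wedge product of a one-form and a two-form -/
def wedge12 (ν : V → C) (ω : V → V → C) : V → V → V → C :=
  fun X Y Z => ν X * ω Y Z - ν Y * ω X Z + ν Z * ω X Y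

/-- wedge product of two two-forms -/
def wedge22 (α β : V → V → C) : V → V → V → V → C := fun X Y Z W =>
  α X Y * β Z W - α X Z * β Y W + α X W * β Y Z
    + α Z W * β X Y - α Y W * β X Z + α Y Z * β X W

/-- a (0,3)-tensor is an alternating three-form -/
def IsAlt3 (T : V → V → V → C) : Prop :=
  (∀ X Y Z, T Y X Z = -T X Y Z) ∧ (∀ X Y Z, T X Z Y = -T X Y Z)

variable [AddCommGroup V] [Module C V]

/-- `C`-linearity (tensoriality) of a three-form in its first argument -/
def Lin3 (T : V → V → V → C) : Prop :=
  ∀ (f : C) X X' Y Z, T (f • X + X') Y Z = f * T X Y Z + T X' Y Z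

/-- `C`-linearity (tensoriality) of a one-form -/
def Lin1 (ν : V → C) : Prop := ∀ (f : C) X X', ν (f • X + X') = f * ν X + ν X'

end ops

section derived

variable {n : ℕ} {C V : Type*} [CommRing C] [Algebra ℝ C] [AddCommGroup V] [Module C V]
  [Module ℝ V] [IsScalarTower ℝ C V]

variable (M : AQH n C V)

/-- the Kähler form `ω_A(X,Y) = g(X, A Y)` -/
def omega (A : V → V) : V → V → C := fun X Y => M.g X (A Y)

/-- `(∇_X A) Y` -/
def nabA (A : V → V) : V → V → V := fun X Y => M.nab X (A Y) - A (M.nab X Y)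

/-- covariant derivative of a 2-form: `(∇_X ψ)(Y,Z)` -/
def nab2 (ψ : V → V → C) : V → V → V → C :=
  fun X Y Z => M.D X (ψ Y Z) - ψ (M.nab X Y) Z - ψ Y (M.nab X Z)

/-- covariant derivative of a 4-form -/
def nab4 (ψ : V → V → V → V → C) : V → V → V → V → V → C :=
  fun X Y Z W U => M.D X (ψ Y Z W U) - ψ (M.nab X Y) Z W U - ψ Y (M.nab X Z) W U
    - ψ Y Z (M.nab X W) U - ψ Y Z W (M.nab X U)

/-- exterior derivative of a one-form -/
def d1 (ν : V → C) : V → V → C :=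
  fun X Y => M.D X (ν Y) - M.D Y (ν X) - ν (M.bracket X Y)

/-- exterior derivative of a two-form -/
def d2 (ψ : V → V → C) : V → V → V → C :=
  fun X Y Z => M.D X (ψ Y Z) - M.D Y (ψ X Z) + M.D Z (ψ X Y)
    - ψ (M.bracket X Y) Z + ψ (M.bracket X Z) Y - ψ (M.bracket Y Z) X

/-- exterior derivative of a four-form -/
def d4 (ψ : V → V → V → V → C) : V → V → V → V → V → C := fun X Y Z W U =>
  M.D X (ψ Y Z W U) - M.D Y (ψ X Z W U) + M.D Z (ψ X Y W U) - M.D W (ψ X Y Z U)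
      + M.D U (ψ X Y Z W)
    - ψ (M.bracket X Y) Z W U + ψ (M.bracket X Z) Y W U - ψ (M.bracket X W) Y Z U
      + ψ (M.bracket X U) Y Z W
    - ψ (M.bracket Y Z) X W U + ψ (M.bracket Y W) X Z U - ψ (M.bracket Y U) X Z W
    - ψ (M.bracket Z W) X Y U + ψ (M.bracket Z U) X Y W
    - ψ (M.bracket W U) X Y Z

/-- the Nijenhuis tensor `N_A(X,Y)` -/
def nijV (A : V → V) : V → V → V := fun X Y =>
  M.bracket X Y + A (M.bracket (A X) Y) + A (M.bracket X (A Y)) - M.bracket (A X) (A Y)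

/-- the Nijenhuis `(0,3)`-tensor `N_A(X,Y,Z) = g(X, N_A(Y,Z))` -/
def nij3 (A : V → V) : V → V → V → C := fun X Y Z => M.g X (M.nijV A Y Z)

/-- the induced inner product of two 2-forms,
`⟨ψ,φ⟩ = (1/2!) ψ(e_i,e_j) φ(e_i,e_j)` -/
def inner2 (ψ φ : V → V → C) : C :=
  (1/2 : ℝ) • ∑ i, ∑ j, ψ (M.frame i) (M.frame j) * φ (M.frame i) (M.frame j)

/-- the contraction `(Λ_A β)(X) = ⟨X ⌟ β, ω_A⟩` of a three-form -/
def Lam (A : V → V) (β : V → V → V → C) : V → C :=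
  fun X => (1/2 : ℝ) •
    ∑ i, ∑ j, β X (M.frame i) (M.frame j) * M.omega A (M.frame i) (M.frame j)

/-- `λ_I(X) = (1/2n) ⟨∇_X ω_J, ω_K⟩` -/
def lambdaI : V → C := fun X =>
  (1/(2*(n:ℝ))) • M.inner2 (fun Y Z => M.nab2 (M.omega M.J) X Y Z) (M.omega M.K)

/-- `λ_J(X) = (1/2n) ⟨∇_X ω_K, ω_I⟩` -/
def lambdaJ : V → C := fun X =>
  (1/(2*(n:ℝ))) • M.inner2 (fun Y Z => M.nab2 (M.omega M.K) X Y Z) (M.omega M.I)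

/-- `λ_K(X) = (1/2n) ⟨∇_X ω_I, ω_J⟩` -/
def lambdaK : V → C := fun X =>
  (1/(2*(n:ℝ))) • M.inner2 (fun Y Z => M.nab2 (M.omega M.I) X Y Z) (M.omega M.J)

/-- codifferential of a two-form -/
def codiff2 (ψ : V → V → C) : V → C := fun Z => -∑ i, M.nab2 ψ (M.frame i) (M.frame i) Z

/-- codifferential of a four-form -/
def codiff4 (ψ : V → V → V → V → C) : V → V → V → C :=
  fun X Y Z => -∑ i, M.nab4 ψ (M.frame i) (M.frame i) X Y Z

/-- `β_I = J dω_J + K dω_K` -/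
def betaI : V → V → V → C := fun X Y Z =>
  act3 M.J (M.d2 (M.omega M.J)) X Y Z + act3 M.K (M.d2 (M.omega M.K)) X Y Z

/-- `β_J = K dω_K + I dω_I` -/
def betaJ : V → V → V → C := fun X Y Z =>
  act3 M.K (M.d2 (M.omega M.K)) X Y Z + act3 M.I (M.d2 (M.omega M.I)) X Y Z

/-- `β_K = I dω_I + J dω_J` -/
def betaK : V → V → V → C := fun X Y Z =>
  act3 M.I (M.d2 (M.omega M.I)) X Y Z + act3 M.J (M.d2 (M.omega M.J)) X Y Z

/-- the intrinsic torsion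
`ξ_X Y = -(1/4) Σ_A A (∇_X A) Y + (1/2) Σ_A λ_A(X) A Y` -/
def xi : V → V → V := fun X Y =>
  (-(1/4 : ℝ)) • (M.I (M.nabA M.I X Y) + M.J (M.nabA M.J X Y) + M.K (M.nabA M.K X Y))
    + (1/2 : ℝ) • (M.lambdaI X • M.I Y + M.lambdaJ X • M.J Y + M.lambdaK X • M.K Y)

/-- the one-form `ν^I_4 = I Λ_I β_I` -/
def nu4I : V → C := act1 M.I (M.Lam M.I M.betaI)

/-- the one-form `ν^J_4 = J Λ_J β_J` -/
def nu4J : V → C := act1 M.J (M.Lam M.J M.betaJ)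

/-- the one-form `ν^K_4 = K Λ_K β_K` -/
def nu4K : V → C := act1 M.K (M.Lam M.K M.betaK)

/-- `ν^I_3`, determined by `J Λ_J β_I = (1/(2n-1)) (ν^I_4 + (2n+1)(n-1) ν^I_3)` -/
def nu3I : V → C := fun X =>
  (1/((2*(n:ℝ)+1) * ((n:ℝ)-1))) •
    ((2*(n:ℝ)-1) • act1 M.J (M.Lam M.J M.betaI) X - M.nu4I X)

/-- `ν^J_3`, determined by `K Λ_K β_J = (1/(2n-1)) (ν^J_4 + (2n+1)(n-1) ν^J_3)` -/
def nu3J : V → C := fun X =>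
  (1/((2*(n:ℝ)+1) * ((n:ℝ)-1))) •
    ((2*(n:ℝ)-1) • act1 M.K (M.Lam M.K M.betaJ) X - M.nu4J X)

/-- `ν^K_3`, determined by `I Λ_I β_K = (1/(2n-1)) (ν^K_4 + (2n+1)(n-1) ν^K_3)` -/
def nu3K : V → C := fun X =>
  (1/((2*(n:ℝ)+1) * ((n:ℝ)-1))) •
    ((2*(n:ℝ)-1) • act1 M.I (M.Lam M.I M.betaK) X - M.nu4K X)

/-- `β^{(E)}_{3I} = -(1/2) Jν^I_3 ∧ ω_J - (1/2) Kν^I_3 ∧ ω_K + (1/(2n-1)) Iν^I_3 ∧ ω_I` -/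
def betaE3I : V → V → V → C := fun X Y Z =>
  (-(1/2:ℝ)) • wedge12 (act1 M.J M.nu3I) (M.omega M.J) X Y Z
    + (-(1/2:ℝ)) • wedge12 (act1 M.K M.nu3I) (M.omega M.K) X Y Z
    + (1/(2*(n:ℝ)-1)) • wedge12 (act1 M.I M.nu3I) (M.omega M.I) X Y Z

def betaE3J : V → V → V → C := fun X Y Z =>
  (-(1/2:ℝ)) • wedge12 (act1 M.K M.nu3J) (M.omega M.K) X Y Z
    + (-(1/2:ℝ)) • wedge12 (act1 M.I M.nu3J) (M.omega M.I) X Y Z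
    + (1/(2*(n:ℝ)-1)) • wedge12 (act1 M.J M.nu3J) (M.omega M.J) X Y Z

def betaE3K : V → V → V → C := fun X Y Z =>
  (-(1/2:ℝ)) • wedge12 (act1 M.I M.nu3K) (M.omega M.I) X Y Z
    + (-(1/2:ℝ)) • wedge12 (act1 M.J M.nu3K) (M.omega M.J) X Y Z
    + (1/(2*(n:ℝ)-1)) • wedge12 (act1 M.K M.nu3K) (M.omega M.K) X Y Z

/-- `β_{4I} = -(1/(2n-1)) Iν^I_4 ∧ ω_I` -/
def beta4I : V → V → V → C := fun X Y Z =>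
  (-(1/(2*(n:ℝ)-1))) • wedge12 (act1 M.I M.nu4I) (M.omega M.I) X Y Z

def beta4J : V → V → V → C := fun X Y Z =>
  (-(1/(2*(n:ℝ)-1))) • wedge12 (act1 M.J M.nu4J) (M.omega M.J) X Y Z

def beta4K : V → V → V → C := fun X Y Z =>
  (-(1/(2*(n:ℝ)-1))) • wedge12 (act1 M.K M.nu4K) (M.omega M.K) X Y Z

/-- `β_I^{(3+K)} = β_I - β^{(E)}_{3I} - β_{4I}` -/
def beta3KI : V → V → V → C := fun X Y Z => M.betaI X Y Z - M.betaE3I X Y Z - M.beta4I X Y Z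

def beta3KJ : V → V → V → C := fun X Y Z => M.betaJ X Y Z - M.betaE3J X Y Z - M.beta4J X Y Z

def beta3KK : V → V → V → C := fun X Y Z => M.betaK X Y Z - M.betaE3K X Y Z - M.beta4K X Y Z

/-- `β_I^{(3)} = (1/6) (2 - 𝓛_J - 𝓛_K) β_I^{(3+K)}` -/
def beta3I : V → V → V → C := fun X Y Z =>
  (1/6:ℝ) • ((2:ℝ) • M.beta3KI X Y Z - calL M.J M.beta3KI X Y Z - calL M.K M.beta3KI X Y Z)

def beta3J : V → V → V → C := fun X Y Z =>
  (1/6:ℝ) • ((2:ℝ) • M.beta3KJ X Y Z - calL M.K M.beta3KJ X Y Z - calL M.I M.beta3KJ X Y Z)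

def beta3K : V → V → V → C := fun X Y Z =>
  (1/6:ℝ) • ((2:ℝ) • M.beta3KK X Y Z - calL M.I M.beta3KK X Y Z - calL M.J M.beta3KK X Y Z)

/-- `β_I^{(K)} = (1/6) (4 + 𝓛_J + 𝓛_K) β_I^{(3+K)}` -/
def betaKI : V → V → V → C := fun X Y Z =>
  (1/6:ℝ) • ((4:ℝ) • M.beta3KI X Y Z + calL M.J M.beta3KI X Y Z + calL M.K M.beta3KI X Y Z)

def betaKJ : V → V → V → C := fun X Y Z =>
  (1/6:ℝ) • ((4:ℝ) • M.beta3KJ X Y Z + calL M.K M.beta3KJ X Y Z + calL M.I M.beta3KJ X Y Z)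

def betaKK : V → V → V → C := fun X Y Z =>
  (1/6:ℝ) • ((4:ℝ) • M.beta3KK X Y Z + calL M.I M.beta3KK X Y Z + calL M.J M.beta3KK X Y Z)

/-- the three-form `ψ^{(3)} = (1/12)(β_I^{(3)} + β_J^{(3)} + β_K^{(3)})` determining `ξ_{33}` -/
def psi3 : V → V → V → C := fun X Y Z =>
  (1/12:ℝ) • (M.beta3I X Y Z + M.beta3J X Y Z + M.beta3K X Y Z)

/-- the three-form `ψ^{(K)} = -(1/48)(β_I^{(K)} + β_J^{(K)} + β_K^{(K)})` determining `ξ_{KH}` -/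
def psiK : V → V → V → C := fun X Y Z =>
  (-(1/48:ℝ)) • (M.betaKI X Y Z + M.betaKJ X Y Z + M.betaKK X Y Z)

/-- the three-form `ψ^{(3)}_I` determining `ξ_{3H}` -/
def psi3I : V → V → V → C := fun X Y Z =>
  (-(1/8:ℝ)) • M.beta3I X Y Z
    + (1/48:ℝ) • ((3:ℝ) • (M.beta3I X Y Z + M.beta3J X Y Z + M.beta3K X Y Z)
        + calL M.I (fun a b c => M.beta3I a b c + M.beta3J a b c + M.beta3K a b c) X Y Z)

def psi3J : V → V → V → C := fun X Y Z =>
  (-(1/8:ℝ)) • M.beta3J X Y Z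
    + (1/48:ℝ) • ((3:ℝ) • (M.beta3I X Y Z + M.beta3J X Y Z + M.beta3K X Y Z)
        + calL M.J (fun a b c => M.beta3I a b c + M.beta3J a b c + M.beta3K a b c) X Y Z)

def psi3K : V → V → V → C := fun X Y Z =>
  (-(1/8:ℝ)) • M.beta3K X Y Z
    + (1/48:ℝ) • ((3:ℝ) • (M.beta3I X Y Z + M.beta3J X Y Z + M.beta3K X Y Z)
        + calL M.K (fun a b c => M.beta3I a b c + M.beta3J a b c + M.beta3K a b c) X Y Z)

/-- the three-form `ψ^{(K)}_I` determining `ξ_{K3}` -/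
def psiKI : V → V → V → C := fun X Y Z =>
  (-(1/2:ℝ)) • M.betaKI X Y Z
    + (1/6:ℝ) • (M.betaKI X Y Z + M.betaKJ X Y Z + M.betaKK X Y Z)

def psiKJ : V → V → V → C := fun X Y Z =>
  (-(1/2:ℝ)) • M.betaKJ X Y Z
    + (1/6:ℝ) • (M.betaKI X Y Z + M.betaKJ X Y Z + M.betaKK X Y Z)

def psiKK : V → V → V → C := fun X Y Z =>
  (-(1/2:ℝ)) • M.betaKK X Y Z
    + (1/6:ℝ) • (M.betaKI X Y Z + M.betaKJ X Y Z + M.betaKK X Y Z)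

/-- the one-form `θ^ξ` determining `ξ_{EH}`,
defined by `(6/n)(2n+1)(n-1) θ^ξ(X) = -⟨ξ_{e_i} e_i, X⟩` -/
def thetaXi : V → C := fun X =>
  (-((n:ℝ)/(6*(2*(n:ℝ)+1)*((n:ℝ)-1)))) • ∑ i, M.g (M.xi (M.frame i) (M.frame i)) X

/-- the local one-form `θ^ξ_I`, defined by `(2/n)(2n+1)(n-1) θ^ξ_I(X) = -⟨I ξ_{e_i} I e_i, X⟩` -/
def thetaXiI : V → C := fun X =>
  (-((n:ℝ)/(2*(2*(n:ℝ)+1)*((n:ℝ)-1)))) •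
    ∑ i, M.g (M.I (M.xi (M.frame i) (M.I (M.frame i)))) X

def thetaXiJ : V → C := fun X =>
  (-((n:ℝ)/(2*(2*(n:ℝ)+1)*((n:ℝ)-1)))) •
    ∑ i, M.g (M.J (M.xi (M.frame i) (M.J (M.frame i)))) X

def thetaXiK : V → C := fun X =>
  (-((n:ℝ)/(2*(2*(n:ℝ)+1)*((n:ℝ)-1)))) •
    ∑ i, M.g (M.K (M.xi (M.frame i) (M.K (M.frame i)))) X

/-- `α_I = -λ_I ⊗ g + (1/2)(J_(2) - J_(3)) ∇ω_K` -/
def alphaI : V → V → V → C := fun X Y Z =>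
  -(M.lambdaI X * M.g Y Z)
    + (1/2:ℝ) • (-(M.nab2 (M.omega M.K) X (M.J Y) Z) + M.nab2 (M.omega M.K) X Y (M.J Z))

def alphaJ : V → V → V → C := fun X Y Z =>
  -(M.lambdaJ X * M.g Y Z)
    + (1/2:ℝ) • (-(M.nab2 (M.omega M.I) X (M.K Y) Z) + M.nab2 (M.omega M.I) X Y (M.K Z))

def alphaK : V → V → V → C := fun X Y Z =>
  -(M.lambdaK X * M.g Y Z)
    + (1/2:ℝ) • (-(M.nab2 (M.omega M.J) X (M.I Y) Z) + M.nab2 (M.omega M.J) X Y (M.I Z))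

/-- the one-form `η_I(X) = α_I(e_i; e_i, X)` -/
def etaI : V → C := fun X => ∑ i, M.alphaI (M.frame i) (M.frame i) X

def etaJ : V → C := fun X => ∑ i, M.alphaJ (M.frame i) (M.frame i) X

def etaK : V → C := fun X => ∑ i, M.alphaK (M.frame i) (M.frame i) X

/-- the fundamental four-form `Ω = Σ_A ω_A ∧ ω_A` -/
def Omega4 : V → V → V → V → C := fun X Y Z W =>
  wedge22 (M.omega M.I) (M.omega M.I) X Y Z W
    + wedge22 (M.omega M.J) (M.omega M.J) X Y Z W
    + wedge22 (M.omega M.K) (M.omega M.K) X Y Z W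

/-- the one-form `θ^{d*Ω} = (1/3) Σ_A A Λ_A d*Ω` -/
def thetaDOmega : V → C := fun X =>
  (1/3:ℝ) • (act1 M.I (M.Lam M.I (M.codiff4 M.Omega4)) X
    + act1 M.J (M.Lam M.J (M.codiff4 M.Omega4)) X
    + act1 M.K (M.Lam M.K (M.codiff4 M.Omega4)) X)

/-- the vector-valued torsion: `g(W, T(X,Y)) = T(W,X,Y)` -/
def Tvec (T : V → V → V → C) : V → V → V := fun X Y => ∑ i, T (M.frame i) X Y • M.frame i

/-- the connection `∇ + (1/2) T` associated to a torsion (0,3)-tensor `T` -/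
def nabT (T : V → V → V → C) : V → V → V := fun X Y => M.nab X Y + (1/2:ℝ) • M.Tvec T X Y

/-- a connection is metric -/
def MetricConn (nab' : V → V → V) : Prop :=
  ∀ X Y Z, M.D X (M.g Y Z) = M.g (nab' X Y) Z + M.g Y (nab' X Z)

/-- a connection is quaternionic, with associated local one-forms `γ_I, γ_J, γ_K`:
`∇'_X I = γ_K(X) J - γ_J(X) K`, and cyclically -/
def QuatConn (nab' : V → V → V) (γI γJ γK : V → C) : Prop :=
  (∀ X Y, nab' X (M.I Y) - M.I (nab' X Y) = γK X • M.J Y - γJ X • M.K Y) ∧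
  (∀ X Y, nab' X (M.J Y) - M.J (nab' X Y) = γI X • M.K Y - γK X • M.I Y) ∧
  (∀ X Y, nab' X (M.K Y) - M.K (nab' X Y) = γJ X • M.I Y - γI X • M.J Y)

/-- the HKT condition: `I, J, K` integrable and there is a metric connection
`∇ + (1/2)T` with totally skew torsion making `I, J, K` parallel -/
def IsHKT : Prop :=
  (∀ X Y, M.nijV M.I X Y = 0) ∧ (∀ X Y, M.nijV M.J X Y = 0) ∧
  (∀ X Y, M.nijV M.K X Y = 0) ∧
  ∃ T : V → V → V → C, IsAlt3 T ∧ Lin3 T ∧ M.MetricConn (M.nabT T) ∧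
    (∀ X Y, M.nabT T X (M.I Y) = M.I (M.nabT T X Y)) ∧
    (∀ X Y, M.nabT T X (M.J Y) = M.J (M.nabT T X Y)) ∧
    (∀ X Y, M.nabT T X (M.K Y) = M.K (M.nabT T X Y))

/-- membership of a three-form in `KH`: type `{2,1}` for each `A` and `Λ_A ψ = 0` -/
def InKH3 (ψ : V → V → V → C) : Prop :=
  IsAlt3 ψ ∧ Lin3 ψ ∧
  calL M.I ψ = ψ ∧ calL M.J ψ = ψ ∧ calL M.K ψ = ψ ∧
  M.Lam M.I ψ = 0 ∧ M.Lam M.J ψ = 0 ∧ M.Lam M.K ψ = 0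

/-- the `(0,3)`-tensor of the `KH`-component of the torsion determined by `ψ^{(K)}`:
`3ψ - Σ_A A_(23) ψ` -/
def xiKH3 (ψ : V → V → V → C) : V → V → V → C := fun X Y Z =>
  (3:ℝ) • ψ X Y Z - (op23 M.I ψ X Y Z + op23 M.J ψ X Y Z + op23 M.K ψ X Y Z)

/-- the `(0,3)`-tensor of the `EH`-component of the torsion determined by the
one-form `θ`: `3 e_i ⊗ e_i ∧ θ - Σ_A (e_i ⊗ A e_i ∧ A θ + (2/n) A θ ⊗ ω_A)` -/
def xiEH3 (θ : V → C) : V → V → V → C := fun X Y Z =>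
  (3:ℝ) • ∑ i, M.g (M.frame i) X *
      (M.g (M.frame i) Y * θ Z - M.g (M.frame i) Z * θ Y)
  - ((∑ i, M.g (M.frame i) X *
        (M.g (M.I (M.frame i)) Y * act1 M.I θ Z - M.g (M.I (M.frame i)) Z * act1 M.I θ Y))
    + (∑ i, M.g (M.frame i) X *
        (M.g (M.J (M.frame i)) Y * act1 M.J θ Z - M.g (M.J (M.frame i)) Z * act1 M.J θ Y))
    + (∑ i, M.g (M.frame i) X *
        (M.g (M.K (M.frame i)) Y * act1 M.K θ Z - M.g (M.K (M.frame i)) Z * act1 M.K θ Y)))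
  - (2/(n:ℝ)) • (act1 M.I θ X * M.omega M.I Y Z + act1 M.J θ X * M.omega M.J Y Z
      + act1 M.K θ X * M.omega M.K Y Z)

/-- the intrinsic torsion lies in `(K+E)H`: it is the sum of a `KH`-tensor and an
`EH`-tensor as described in §3 of the paper -/
def inKEH : Prop :=
  ∃ (ψ : V → V → V → C) (θ : V → C), M.InKH3 ψ ∧ Lin1 θ ∧
    ∀ X Y Z, M.g Y (M.xi X Z) = M.xiKH3 ψ X Y Z + M.xiEH3 θ X Y Z

end derived

end AQH

/-!
Fix `X`. On endomorphisms, `∇_X` is a derivation `δ`, and for `A = I, J, K` the square `A² = -1`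
makes `δA` anticommute with `A`.

* The Leibniz rule on the products `JI = -K` and `KI = J` gives `⁅Σ_A A (δA), I⁆ = 4 δI`, so the
  first term of `ξ_X` cancels `δI`, and `δI + ⁅ξ_X, I⁆` is the commutator of `½ Σ_A λ_A(X) A`
  with `I`. This is (2).
* Each `A ξ A` equals `-ξ + A ⁅ξ, A⁆`; summing over `A` with (2) gives `-3ξ + 4ξ = ξ`.
* Both `A` and `δA` are skew-adjoint and they anticommute, so `A (δA)` is skew-adjoint. Hence
  `ξ_X` is skew-adjoint, which is (1).
* Multiplying the equation (2) for `J` by `K` and taking traces gives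
  `tr(K δJ) = -2 tr(I ξ_X) - 4n λ_I(X)`, while `tr(K δJ) = -2 ⟨∇_X ω_J, ω_K⟩`. The normalisation
  of `λ_I` is therefore exactly the condition `tr(I ξ_X) = 0`.
-/

namespace AQH

section QuaternionBasis

variable {C R : Type*} [CommRing C] [Ring R] [Algebra C R]
  (q : QuaternionAlgebra.Basis R (-1 : C) 0 (-1))

/-- The quaternion basis `(j, k, i)`: identities proved for `i` are transported to `j` and `k`
along this cyclic symmetry. -/
def cyclicShift : QuaternionAlgebra.Basis R (-1 : C) 0 (-1) where
  i := q.j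
  j := q.k
  k := q.i
  i_mul_i := by simp
  j_mul_j := by simp
  i_mul_j := by simp
  j_mul_i := by simp

theorem lie_imaginary_i (a b c : C) :
    ⁅a • q.i + b • q.j + c • q.k, q.i⁆ = 2 • (c • q.j - b • q.k) := by
  simp only [Ring.lie_def, add_mul, mul_add, smul_mul_assoc, mul_smul_comm, q.j_mul_i, q.k_mul_i,
    q.i_mul_j, q.i_mul_k]
  module

theorem sum_conj_eq_of_lie_eq {a b c : C} {ξ x y z : R}
    (hi : x + ⁅ξ, q.i⁆ = c • q.j - b • q.k) (hj : y + ⁅ξ, q.j⁆ = a • q.k - c • q.i)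
    (hk : z + ⁅ξ, q.k⁆ = b • q.i - a • q.j) :
    q.i * ξ * q.i + q.j * ξ * q.j + q.k * ξ * q.k =
      2 • (a • q.i + b • q.j + c • q.k) - (q.i * x + q.j * y + q.k * z) - 3 • ξ := by
  have conj_eq {u v w : R} (hu : u * u = -1) (h : v + ⁅ξ, u⁆ = w) :
      u * ξ * u = u * w - u * v - ξ := by
    rw [← h, Ring.lie_def, mul_add, mul_sub, ← mul_assoc u u, hu]
    noncomm_ring
  rw [conj_eq (by simp) hi, conj_eq (by simp) hj, conj_eq (by simp) hk]
  simp only [mul_sub, mul_smul_comm, q.i_mul_j, q.i_mul_k, q.j_mul_k, q.j_mul_i, q.k_mul_i,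
    q.k_mul_j]
  module

section Derivation

variable {δ : R →+ R} (hδ : ∀ x y, δ (x * y) = δ x * y + x * δ y)

include hδ

theorem derivation_mul_eq_neg_mul_derivation {x : R} (hx : x * x = -1) :
    δ x * x = -(x * δ x) := by
  have map_one_eq_zero : δ 1 = 0 := by simpa using hδ 1 1
  have h := hδ x x
  rw [hx, map_neg, map_one_eq_zero, neg_zero] at h
  exact eq_neg_of_add_eq_zero_left h.symm

theorem lie_sum_mul_derivation_i :
    ⁅q.i * δ q.i + q.j * δ q.j + q.k * δ q.k, q.i⁆ = 4 • δ q.i := by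
  have anticomm : δ q.i * q.i = -(q.i * δ q.i) :=
    derivation_mul_eq_neg_mul_derivation hδ (by simp)
  have leibniz_ji : δ q.j * q.i + q.j * δ q.i = -δ q.k := by simpa using (hδ q.j q.i).symm
  have leibniz_ki : δ q.k * q.i + q.k * δ q.i = δ q.j := by simpa using (hδ q.k q.i).symm
  have ii : q.i * q.i = -1 := by simp
  have jj : q.j * q.j = -1 := by simp
  have kk : q.k * q.k = -1 := by simp
  have ik : q.i * q.k = -q.j := by simp
  calc ⁅q.i * δ q.i + q.j * δ q.j + q.k * δ q.k, q.i⁆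
      = q.i * (δ q.i * q.i) - q.i * q.i * δ q.i
          + (q.j * (δ q.j * q.i) - q.i * q.j * δ q.j)
          + (q.k * (δ q.k * q.i) - q.i * q.k * δ q.k) := by
        rw [Ring.lie_def]; noncomm_ring
    _ = 4 • δ q.i := by
        rw [anticomm, eq_sub_of_add_eq leibniz_ji, eq_sub_of_add_eq leibniz_ki, q.i_mul_j, ik]
        linear_combination (norm := noncomm_ring)
          -2 * ii * δ q.i - jj * δ q.i - kk * δ q.i

end Derivation

section Trace

variable [Algebra ℝ C] {tr : R →ₗ[C] C} (htr : ∀ x y, tr (x * y) = tr (y * x))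

include htr

theorem trace_j_eq_zero : tr q.j = 0 := by
  have h : tr q.j = -tr q.j := by simpa using htr q.k q.i
  linear_combination (norm := module) (1 / 2 : ℝ) • h

theorem trace_i_mul_eq_of_lie_j_eq {a c : C} {ξ y : R}
    (hj : y + ⁅ξ, q.j⁆ = a • q.k - c • q.i) :
    tr (q.i * ξ) = -(1 / 2 : ℝ) • (a * tr 1 + tr (q.k * y)) := by
  have trace_mul_lie : tr (q.k * ⁅ξ, q.j⁆) = 2 • tr (q.i * ξ) := by
    have h := htr (q.k * ξ) q.j
    rw [← mul_assoc, q.j_mul_k] at h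
    rw [Ring.lie_def, mul_sub, map_sub, ← mul_assoc, h, ← mul_assoc, q.k_mul_j]
    simp [two_mul]
  have h := congrArg (fun z ↦ tr (q.k * z)) hj
  simp only [mul_add, mul_sub, mul_smul_comm, q.k_mul_k, q.k_mul_i, map_add, map_sub, map_smul,
    map_neg, trace_mul_lie, trace_j_eq_zero q htr, smul_eq_mul] at h
  have double : 2 • tr (q.i * ξ) = -(a * tr 1 + tr (q.k * y)) := by linear_combination h
  linear_combination (norm := module) (1 / 2 : ℝ) • double

end Trace

section Torsion

variable [Algebra ℝ R]

/-- The algebraic form of the intrinsic torsion `ξ_X`, with the endomorphism algebra replaced by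
an arbitrary algebra `R`, the derivation `A ↦ ∇_X A` by `δ`, and `λ_I(X), λ_J(X), λ_K(X)` by
`a, b, c`. -/
def quaternionicTorsion (δ : R →+ R) (a b c : C) : R :=
  (-(1 / 4 : ℝ)) • (q.i * δ q.i + q.j * δ q.j + q.k * δ q.k)
    + (1 / 2 : ℝ) • (a • q.i + b • q.j + c • q.k)

theorem quaternionicTorsion_cyclicShift (δ : R →+ R) (a b c : C) :
    quaternionicTorsion (cyclicShift q) δ b c a = quaternionicTorsion q δ a b c := by
  simp only [quaternionicTorsion, cyclicShift]
  congr 2 <;> abel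

variable {δ : R →+ R} (hδ : ∀ x y, δ (x * y) = δ x * y + x * δ y) (a b c : C)

include hδ

theorem derivation_add_lie_quaternionicTorsion_i :
    δ q.i + ⁅quaternionicTorsion q δ a b c, q.i⁆ = c • q.j - b • q.k := by
  have lie_sum := lie_sum_mul_derivation_i q hδ
  have lie_imaginary := lie_imaginary_i q a b c
  rw [Ring.lie_def] at lie_sum lie_imaginary
  rw [quaternionicTorsion, Ring.lie_def, add_mul, mul_add]
  simp only [smul_mul_assoc, mul_smul_comm]
  generalize a • q.i + b • q.j + c • q.k = u at lie_imaginary ⊢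
  generalize c • q.j - b • q.k = w at lie_imaginary ⊢
  linear_combination (norm := module)
    (-(1 / 4 : ℝ)) • lie_sum + (1 / 2 : ℝ) • lie_imaginary

theorem derivation_add_lie_quaternionicTorsion_j :
    δ q.j + ⁅quaternionicTorsion q δ a b c, q.j⁆ = a • q.k - c • q.i := by
  rw [← quaternionicTorsion_cyclicShift]
  exact derivation_add_lie_quaternionicTorsion_i (cyclicShift q) hδ b c a

theorem derivation_add_lie_quaternionicTorsion_k :
    δ q.k + ⁅quaternionicTorsion q δ a b c, q.k⁆ = b • q.i - a • q.j := by
  rw [← quaternionicTorsion_cyclicShift]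
  exact derivation_add_lie_quaternionicTorsion_j (cyclicShift q) hδ b c a

theorem sum_conj_quaternionicTorsion :
    q.i * quaternionicTorsion q δ a b c * q.i + q.j * quaternionicTorsion q δ a b c * q.j
      + q.k * quaternionicTorsion q δ a b c * q.k = quaternionicTorsion q δ a b c := by
  rw [sum_conj_eq_of_lie_eq q (derivation_add_lie_quaternionicTorsion_i q hδ a b c)
    (derivation_add_lie_quaternionicTorsion_j q hδ a b c)
    (derivation_add_lie_quaternionicTorsion_k q hδ a b c), quaternionicTorsion]
  generalize a • q.i + b • q.j + c • q.k = u
  module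

section Trace

variable [Algebra ℝ C] {tr : R →ₗ[C] C} (htr : ∀ x y, tr (x * y) = tr (y * x))

include htr

theorem trace_i_mul_quaternionicTorsion_eq_zero {a : C} (b c : C)
    (ha : a * tr 1 = -tr (q.k * δ q.j)) : tr (q.i * quaternionicTorsion q δ a b c) = 0 := by
  rw [trace_i_mul_eq_of_lie_j_eq q htr (derivation_add_lie_quaternionicTorsion_j q hδ a b c), ha,
    neg_add_cancel, smul_zero]

theorem trace_j_mul_quaternionicTorsion_eq_zero (a : C) {b : C} (c : C)
    (hb : b * tr 1 = -tr (q.i * δ q.k)) : tr (q.j * quaternionicTorsion q δ a b c) = 0 := by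
  rw [← quaternionicTorsion_cyclicShift]
  exact trace_i_mul_quaternionicTorsion_eq_zero (cyclicShift q) hδ htr c a hb

theorem trace_k_mul_quaternionicTorsion_eq_zero (a b : C) {c : C}
    (hc : c * tr 1 = -tr (q.j * δ q.i)) : tr (q.k * quaternionicTorsion q δ a b c) = 0 := by
  rw [← quaternionicTorsion_cyclicShift]
  exact trace_j_mul_quaternionicTorsion_eq_zero (cyclicShift q) hδ htr b a hc

end Trace

end Torsion

end QuaternionBasis

section Endomorphisms

variable {C V : Type*} [CommRing C] [AddCommGroup V] [Module C V]

/-- A `C`-linear map `V → V`, given in the unbundled form used in the fields of `AQH`, bundled as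
an endomorphism. -/
@[simps]
def endOfLinear (A : V → V) (hA : ∀ (f : C) X Y, A (f • X + Y) = f • A X + A Y) :
    Module.End C V where
  toFun := A
  map_add' X Y := by simpa using hA 1 X Y
  map_smul' f X := by
    have map_zero : A 0 = 0 := by simpa using hA 1 0 0
    simpa [map_zero] using hA f X 0

theorem isSkewAdjoint_mul_of_mul_eq_neg_mul {B : LinearMap.BilinForm C V} {A A' : Module.End C V}
    (hA : B.IsSkewAdjoint A) (hA' : B.IsSkewAdjoint A') (h : A' * A = -(A * A')) :
    B.IsSkewAdjoint (A * A') := by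
  have adjoint : LinearMap.IsAdjointPair B B (A * A') (-A' * -A) :=
    LinearMap.IsAdjointPair.mul hA hA'
  rwa [neg_mul_neg, h] at adjoint

theorem isSkewAdjoint_of_mul_self_eq_neg_one {B : LinearMap.BilinForm C V} {A : Module.End C V}
    (hA : A * A = -1) (isometry : ∀ X Y, B (A X) (A Y) = B X Y) : B.IsSkewAdjoint A := fun X Y ↦ by
  have apply_apply : A (A X) = -X := congrArg (· X) hA
  rw [← isometry, apply_apply]
  simp

variable {n : ℕ} [Algebra ℝ C] (M : AQH n C V)

/-- The adapted basis `(I, J, K)` as a quaternion basis of the algebra of endomorphisms. -/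
def quaternionBasis : QuaternionAlgebra.Basis (Module.End C V) (-1 : C) 0 (-1) where
  i := endOfLinear M.I M.I_lin
  j := endOfLinear M.J M.J_lin
  k := endOfLinear M.K M.K_lin
  i_mul_i := by ext X; simp [M.I_sq]
  j_mul_j := by ext X; simp [M.J_sq]
  i_mul_j := by ext X; simp [M.K_def]
  j_mul_i := by ext X; simp [M.K_def, M.anticomm]

/-- The metric `g` as a bilinear form. -/
def metric : LinearMap.BilinForm C V :=
  LinearMap.mk₂ C M.g M.g_add M.g_smul
    (fun X Y Z ↦ by rw [M.g_symm, M.g_add, M.g_symm Y, M.g_symm Z])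
    (fun f X Y ↦ by rw [M.g_symm, M.g_smul, M.g_symm Y, smul_eq_mul])

theorem metric_apply (X Y : V) : M.metric X Y = M.g X Y := rfl

/-- The covariant derivative `A ↦ ∇_X A` on endomorphisms of the module of vector fields. -/
def covDeriv (X : V) : Module.End C V →+ Module.End C V where
  toFun A :=
    { toFun := M.nabA A X
      map_add' := fun Y Z ↦ by simp only [nabA, map_add, M.nab_add]; abel
      map_smul' := fun f Y ↦ by
        simp only [nabA, map_add, map_smul, M.nab_leibniz, RingHom.id_apply, smul_sub]; abel }
  map_zero' := by
    ext Y
    have nab_zero : M.nab X 0 = 0 := by simpa using M.nab_add X 0 0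
    simp [nabA, nab_zero]
  map_add' A B := by ext Y; simp [nabA, M.nab_add]; abel

@[simp]
theorem covDeriv_apply (X Y : V) (A : Module.End C V) : M.covDeriv X A Y = M.nabA A X Y := rfl

theorem covDeriv_mul (X : V) (A B : Module.End C V) :
    M.covDeriv X (A * B) = M.covDeriv X A * B + A * M.covDeriv X B := by
  ext Y; simp [nabA]

theorem isSkewAdjoint_quaternionBasis_i : M.metric.IsSkewAdjoint M.quaternionBasis.i :=
  isSkewAdjoint_of_mul_self_eq_neg_one (by simp) M.I_metric

theorem isSkewAdjoint_quaternionBasis_j : M.metric.IsSkewAdjoint M.quaternionBasis.j :=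
  isSkewAdjoint_of_mul_self_eq_neg_one (by simp) M.J_metric

theorem isSkewAdjoint_quaternionBasis_k : M.metric.IsSkewAdjoint M.quaternionBasis.k := by
  rw [← M.quaternionBasis.i_mul_j]
  exact isSkewAdjoint_mul_of_mul_eq_neg_mul M.isSkewAdjoint_quaternionBasis_i
    M.isSkewAdjoint_quaternionBasis_j (by simp)

theorem isSkewAdjoint_covDeriv {A : Module.End C V} (hA : M.metric.IsSkewAdjoint A) (X : V) :
    M.metric.IsSkewAdjoint (M.covDeriv X A) := fun Y Z ↦ by
  have skew (Y Z : V) : M.metric (A Y) Z = -M.metric Y (A Z) := by simpa using hA Y Z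
  have D_skew : M.D X (M.metric (A Y) Z) + M.D X (M.metric Y (A Z)) = 0 := by
    have D_zero : M.D X 0 = 0 := by simpa using M.D_add X 0 0
    rw [← M.D_add, skew, neg_add_cancel, D_zero]
  have nab_AY := M.nab_metric X (A Y) Z
  have nab_AZ := M.nab_metric X Y (A Z)
  simp only [← metric_apply] at nab_AY nab_AZ
  simp only [covDeriv_apply, nabA, map_sub, LinearMap.sub_apply, Pi.neg_apply, map_neg, skew]
  linear_combination D_skew - nab_AY - nab_AZ - skew Y (M.nab X Z)

variable [Module ℝ V] [IsScalarTower ℝ C V]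

/-- The map `Y ↦ ξ_X Y`, as an endomorphism of the module of vector fields. -/
def xiEnd (X : V) : Module.End C V :=
  quaternionicTorsion M.quaternionBasis (M.covDeriv X) (M.lambdaI X) (M.lambdaJ X) (M.lambdaK X)

theorem xiEnd_apply (X Y : V) : M.xiEnd X Y = M.xi X Y := rfl

/-- The minimal `Sp(n)Sp(1)`-connection `∇^aqH = ∇ + ξ`. -/
def minimalConn : V → V → V := fun X Y ↦ M.nab X Y + M.xi X Y

theorem isSkewAdjoint_xiEnd (X : V) : M.metric.IsSkewAdjoint (M.xiEnd X) := by
  have mul_covDeriv_mem {A : Module.End C V} (hA : M.metric.IsSkewAdjoint A) (hAA : A * A = -1) :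
      A * M.covDeriv X A ∈ M.metric.skewAdjointSubmodule :=
    (LinearMap.mem_skewAdjointSubmodule _).2 <|
      isSkewAdjoint_mul_of_mul_eq_neg_mul hA (M.isSkewAdjoint_covDeriv hA X)
        (derivation_mul_eq_neg_mul_derivation (M.covDeriv_mul X) hAA)
  have hi := M.isSkewAdjoint_quaternionBasis_i
  have hj := M.isSkewAdjoint_quaternionBasis_j
  have hk := M.isSkewAdjoint_quaternionBasis_k
  rw [← LinearMap.mem_skewAdjointSubmodule, xiEnd, quaternionicTorsion]
  refine add_mem (Submodule.smul_of_tower_mem _ _ ?_) (Submodule.smul_of_tower_mem _ _ ?_)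
  · exact add_mem (add_mem (mul_covDeriv_mem hi (by simp)) (mul_covDeriv_mem hj (by simp)))
      (mul_covDeriv_mem hk (by simp))
  · rw [← LinearMap.mem_skewAdjointSubmodule] at hi hj hk
    exact add_mem (add_mem (Submodule.smul_mem _ _ hi) (Submodule.smul_mem _ _ hj))
      (Submodule.smul_mem _ _ hk)

theorem metricConn_minimalConn : M.MetricConn M.minimalConn := fun X Y Z ↦ by
  have xi_skew : M.metric (M.xi X Y) Z = -M.metric Y (M.xi X Z) := by
    simpa [xiEnd_apply] using M.isSkewAdjoint_xiEnd X Y Z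
  rw [M.nab_metric]
  simp only [minimalConn, ← metric_apply, map_add, LinearMap.add_apply, xi_skew]
  abel

theorem quatConn_minimalConn :
    M.QuatConn M.minimalConn M.lambdaI M.lambdaJ M.lambdaK := by
  have conn_commutator {A T : Module.End C V} {X : V} (h : M.covDeriv X A + ⁅M.xiEnd X, A⁆ = T)
      (Y : V) : M.minimalConn X (A Y) - A (M.minimalConn X Y) = T Y := by
    simp only [← h, minimalConn, ← xiEnd_apply, Ring.lie_def, LinearMap.add_apply,
      LinearMap.sub_apply, Module.End.mul_apply, covDeriv_apply, nabA, map_add]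
    abel
  have leibniz := M.covDeriv_mul
  exact ⟨fun X ↦ conn_commutator (derivation_add_lie_quaternionicTorsion_i _ (leibniz X) _ _ _),
    fun X ↦ conn_commutator (derivation_add_lie_quaternionicTorsion_j _ (leibniz X) _ _ _),
    fun X ↦ conn_commutator (derivation_add_lie_quaternionicTorsion_k _ (leibniz X) _ _ _)⟩

theorem sum_conj_xi (X Y : V) :
    M.I (M.xi X (M.I Y)) + M.J (M.xi X (M.J Y)) + M.K (M.xi X (M.K Y)) = M.xi X Y :=
  LinearMap.congr_fun (sum_conj_quaternionicTorsion M.quaternionBasis (M.covDeriv_mul X) _ _ _) Y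

end Endomorphisms

section Frame

variable {n : ℕ} {C V : Type*} [CommRing C] [Algebra ℝ C] [AddCommGroup V] [Module C V]
  (M : AQH n C V)

/-- The orthonormal frame as a basis of the module of vector fields. -/
def frameBasis : Module.Basis (Fin (4 * n)) C V :=
  .ofEquivFun
    { toFun := fun X i ↦ M.metric X (M.frame i)
      map_add' := fun X Y ↦ by ext i; simp
      map_smul' := fun f X ↦ by ext i; simp
      invFun := fun c ↦ ∑ i, c i • M.frame i
      left_inv := fun X ↦ (M.frame_span X).symm
      right_inv := fun c ↦ by ext i; simp [metric_apply, M.frame_orthonormal] }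

theorem frameBasis_apply (i : Fin (4 * n)) : M.frameBasis i = M.frame i := by
  rw [frameBasis, Module.Basis.coe_ofEquivFun]
  change ∑ j, (Pi.single i 1 : Fin (4 * n) → C) j • M.frame j = M.frame i
  simp [Pi.single_apply]

theorem frameBasis_repr (X : V) (i : Fin (4 * n)) :
    M.frameBasis.repr X i = M.metric X (M.frame i) := rfl

theorem trace_eq_sum_metric (T : Module.End C V) :
    LinearMap.trace C V T = ∑ i, M.metric (T (M.frame i)) (M.frame i) := by
  rw [LinearMap.trace_eq_matrix_trace C M.frameBasis, Matrix.trace]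
  simp only [Matrix.diag_apply, LinearMap.toMatrix_apply, frameBasis_apply,
    frameBasis_repr]

include M in
theorem trace_one : LinearMap.trace C V 1 = 4 * n := by
  simp [M.trace_eq_sum_metric, metric_apply, M.frame_orthonormal]

theorem sum_metric_mul_metric (X Y : V) :
    ∑ i, M.metric X (M.frame i) * M.metric Y (M.frame i) = M.metric X Y := by
  conv_rhs => rw [M.frame_span Y, map_sum]
  simp [metric_apply, mul_comm]

theorem nab2_omega (A : Module.End C V) (X Y Z : V) :
    M.nab2 (M.omega A) X Y Z = M.metric Y (M.covDeriv X A Z) := by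
  simp only [nab2, omega, M.nab_metric, covDeriv_apply, nabA, map_sub, metric_apply]
  ring

theorem sum_metric_eq_neg_trace {A : Module.End C V} (hA : M.metric.IsSkewAdjoint A)
    (T : Module.End C V) :
    ∑ i, M.metric (T (M.frame i)) (A (M.frame i)) = -LinearMap.trace C V (A * T) := by
  simp only [M.trace_eq_sum_metric, Module.End.mul_apply, ← Finset.sum_neg_distrib]
  refine Finset.sum_congr rfl fun i _ ↦ ?_
  rw [hA]; simp

theorem inner2_nab2_omega {A : Module.End C V} (hA : M.metric.IsSkewAdjoint A)
    (B : Module.End C V) (X : V) :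
    M.inner2 (fun Y Z ↦ M.nab2 (M.omega B) X Y Z) (M.omega A) =
      (1 / 2 : ℝ) • -LinearMap.trace C V (A * M.covDeriv X B) := by
  rw [← M.sum_metric_eq_neg_trace hA, inner2, Finset.sum_comm]
  congr 1
  refine Finset.sum_congr rfl fun j _ ↦ ?_
  rw [← sum_metric_mul_metric]
  refine Finset.sum_congr rfl fun i _ ↦ ?_
  rw [nab2_omega, omega, metric_apply, metric_apply, metric_apply, M.g_symm (M.frame i),
    M.g_symm (M.frame i)]

theorem normalized_inner2_mul_trace_one (hn : n ≠ 0) {A : Module.End C V}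
    (hA : M.metric.IsSkewAdjoint A) (B : Module.End C V) (X : V) :
    (1 / (2 * (n : ℝ))) • M.inner2 (fun Y Z ↦ M.nab2 (M.omega B) X Y Z) (M.omega A)
        * LinearMap.trace C V 1 = -LinearMap.trace C V (A * M.covDeriv X B) := by
  have trace_one_eq : LinearMap.trace C V 1 = algebraMap ℝ C (4 * n) := by
    rw [M.trace_one, map_mul, map_natCast, map_ofNat]
  have normalization : (4 * n : ℝ) * (1 / (2 * n)) * (1 / 2) = 1 := by
    field_simp
    norm_num
  rw [M.inner2_nab2_omega hA, trace_one_eq, mul_comm, ← Algebra.smul_def, smul_smul, smul_smul,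
    normalization, one_smul]

variable [Module ℝ V] [IsScalarTower ℝ C V]

theorem sum_metric_xi_I (hn : n ≠ 0) (X : V) :
    ∑ i, M.g (M.xi X (M.frame i)) (M.I (M.frame i)) = 0 := by
  let q := M.quaternionBasis
  have lambdaI_eq :
      M.lambdaI X * LinearMap.trace C V 1 = -LinearMap.trace C V (q.k * M.covDeriv X q.j) :=
    M.normalized_inner2_mul_trace_one hn M.isSkewAdjoint_quaternionBasis_k q.j X
  have trace_eq_zero : LinearMap.trace C V (q.i * M.xiEnd X) = 0 :=
    trace_i_mul_quaternionicTorsion_eq_zero q (M.covDeriv_mul X) (LinearMap.trace_mul_comm C) _ _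
      lambdaI_eq
  exact (M.sum_metric_eq_neg_trace M.isSkewAdjoint_quaternionBasis_i (M.xiEnd X)).trans
    (neg_eq_zero.2 trace_eq_zero)

theorem sum_metric_xi_J (hn : n ≠ 0) (X : V) :
    ∑ i, M.g (M.xi X (M.frame i)) (M.J (M.frame i)) = 0 := by
  let q := M.quaternionBasis
  have lambdaJ_eq :
      M.lambdaJ X * LinearMap.trace C V 1 = -LinearMap.trace C V (q.i * M.covDeriv X q.k) :=
    M.normalized_inner2_mul_trace_one hn M.isSkewAdjoint_quaternionBasis_i q.k X
  have trace_eq_zero : LinearMap.trace C V (q.j * M.xiEnd X) = 0 :=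
    trace_j_mul_quaternionicTorsion_eq_zero q (M.covDeriv_mul X) (LinearMap.trace_mul_comm C) _ _
      lambdaJ_eq
  exact (M.sum_metric_eq_neg_trace M.isSkewAdjoint_quaternionBasis_j (M.xiEnd X)).trans
    (neg_eq_zero.2 trace_eq_zero)

theorem sum_metric_xi_K (hn : n ≠ 0) (X : V) :
    ∑ i, M.g (M.xi X (M.frame i)) (M.K (M.frame i)) = 0 := by
  let q := M.quaternionBasis
  have lambdaK_eq :
      M.lambdaK X * LinearMap.trace C V 1 = -LinearMap.trace C V (q.j * M.covDeriv X q.i) :=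
    M.normalized_inner2_mul_trace_one hn M.isSkewAdjoint_quaternionBasis_j q.i X
  have trace_eq_zero : LinearMap.trace C V (q.k * M.xiEnd X) = 0 :=
    trace_k_mul_quaternionicTorsion_eq_zero q (M.covDeriv_mul X) (LinearMap.trace_mul_comm C) _ _
      lambdaK_eq
  exact (M.sum_metric_eq_neg_trace M.isSkewAdjoint_quaternionBasis_k (M.xiEnd X)).trans
    (neg_eq_zero.2 trace_eq_zero)

end Frame

end AQH

theorem statement0_general {n : ℕ} {C V : Type*} [CommRing C] [Algebra ℝ C] [AddCommGroup V]
    [Module C V] [Module ℝ V] [IsScalarTower ℝ C V] (hn : n ≠ 0) (M : AQH n C V) :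
    M.MetricConn M.minimalConn ∧
    M.QuatConn M.minimalConn M.lambdaI M.lambdaJ M.lambdaK ∧
    (∀ X Y, M.I (M.xi X (M.I Y)) + M.J (M.xi X (M.J Y)) + M.K (M.xi X (M.K Y)) = M.xi X Y) ∧
    (∀ X, ∑ i, M.g (M.xi X (M.frame i)) (M.I (M.frame i)) = 0) ∧
    (∀ X, ∑ i, M.g (M.xi X (M.frame i)) (M.J (M.frame i)) = 0) ∧
    (∀ X, ∑ i, M.g (M.xi X (M.frame i)) (M.K (M.frame i)) = 0) :=
  ⟨M.metricConn_minimalConn, M.quatConn_minimalConn, M.sum_conj_xi, M.sum_metric_xi_I hn,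
    M.sum_metric_xi_J hn, M.sum_metric_xi_K hn⟩

open AQH in
/-- For an almost quaternion-Hermitian `4n`-manifold with `n > 1`,
`∇^aqH = ∇ + ξ` (with `ξ` as in `AQH.xi`) is the minimal `Sp(n)Sp(1)`-connection:
it is metric, quaternionic with one-forms `λ_A`, and `ξ` takes values in
`T*M ⊗ (sp(n)+sp(1))^⊥`. -/
theorem statement0 {n : ℕ} {C V : Type*} [CommRing C] [Algebra ℝ C] [AddCommGroup V]
    [Module C V] [Module ℝ V] [IsScalarTower ℝ C V]
    (hn : 1 < n) (M : AQH n C V) :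
    -- (1) `∇^aqH = ∇ + ξ` is a metric connection: `∇^aqH g = 0`
    (∀ X Y Z, M.D X (M.g Y Z) =
        M.g (M.nab X Y + M.xi X Y) Z + M.g Y (M.nab X Z + M.xi X Z)) ∧
    -- (2) `(∇^aqH_X I) Y = λ_K(X) J Y - λ_J(X) K Y`, and cyclic permutations
    (∀ X Y, (M.nab X (M.I Y) + M.xi X (M.I Y)) - M.I (M.nab X Y + M.xi X Y)
        = M.lambdaK X • M.J Y - M.lambdaJ X • M.K Y) ∧
    (∀ X Y, (M.nab X (M.J Y) + M.xi X (M.J Y)) - M.J (M.nab X Y + M.xi X Y)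
        = M.lambdaI X • M.K Y - M.lambdaK X • M.I Y) ∧
    (∀ X Y, (M.nab X (M.K Y) + M.xi X (M.K Y)) - M.K (M.nab X Y + M.xi X Y)
        = M.lambdaJ X • M.I Y - M.lambdaI X • M.J Y) ∧
    -- (3) `ξ ∈ T*M ⊗ (sp(n)+sp(1))^⊥`:
    --     `Σ_A A ξ_X (A Y) = ξ_X Y` and `Σ_i ⟨ξ_X e_i, A e_i⟩ = 0` for `A = I, J, K`
    (∀ X Y, M.I (M.xi X (M.I Y)) + M.J (M.xi X (M.J Y)) + M.K (M.xi X (M.K Y))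
        = M.xi X Y) ∧
    (∀ X, ∑ i, M.g (M.xi X (M.frame i)) (M.I (M.frame i)) = 0) ∧
    (∀ X, ∑ i, M.g (M.xi X (M.frame i)) (M.J (M.frame i)) = 0) ∧
    (∀ X, ∑ i, M.g (M.xi X (M.frame i)) (M.K (M.frame i)) = 0) := by
  obtain ⟨metric, ⟨quatI, quatJ, quatK⟩, perp⟩ := statement0_general (by omega) M
  exact ⟨metric, quatI, quatJ, quatK, perp⟩
end
end

section
/- On an almost quaternion-Hermitian manifold, for any local adapted basis I,J,K the Levi-Civita covariant derivative of ω_I is determined by the exterior derivatives of the local Kähler forms: 2∇ω_I = (1 − I_{(23)}) dω_I + (I_{(2)} + I_{(3)}) J_{(1)} dω_J − (1 − I_{(23)}) J_{(1)} dω_K, and also 2∇ω_I = (1 − I_{(23)}) dω_I + (I_{(2)} + I_{(3)}) K_{(1)} dω_K + (1 − I_{(23)}) K_{(1)} dω_J. The corresponding formulas for ∇ω_J and ∇ω_K hold after cyclic permutation of (I,J,K). -/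
/-!  Synthetic (Koszul-style) model of an almost quaternion-Hermitian `4n`-manifold.

`C` plays the role of the commutative ℝ-algebra of smooth functions and `V` that of
the `C`-module of vector fields, equipped with a directional derivative `D`, a Lie
bracket, a Riemannian metric `g` together with its Levi-Civita connection `nab`
(characterised by being torsion-free and metric), a local adapted basis `I, J, K`
of anticommuting almost complex structures with `K = I J`, each compatible with the
metric, and a (local) orthonormal frame.  -/

noncomputable section

open scoped BigOperators

/-!
Write `a`, `b`, `e` for `∇ω_A`, `∇ω_B`, `∇ω_E`, where `A, B, E = AB` is an adapted basis. As `∇` is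
torsion-free, `d` is the alternation of `∇`, so the right-hand side of the formula is a combination
of values of `a`, `b` and `e`. Differentiating `A² = -1` gives `a(AY, AZ) = -a(Y, Z)`, and
differentiating `E = -BA` gives `e(Y, Z) = a(BY, Z) - b(Y, AZ)`. Hence the part
`a_X(Y, Z) - a_X(AY, AZ)` of `(1 - A_(23)) dω_A` is twice `a_X(Y, Z)`, while all remaining terms
cancel by two consequences of these rules:
`e(Y, Z) - e(AY, AZ) = -b(AY, Z) - b(Y, AZ)` for derivatives along `BX`, and
`e(BX, Y) + b(BX, AY) = -a(X, Y)` for derivatives along `Y`, `Z`, `AY` and `AZ`.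
The second formula is the first one for the adapted basis `A, E, -B`.
-/

namespace AQH

section

variable {n : ℕ} {C V : Type*} [CommRing C] [Algebra ℝ C] [AddCommGroup V] [Module C V]
variable (M : AQH n C V)

theorem D_neg (X : V) (f : C) : M.D X (-f) = -M.D X f :=
  (AddMonoidHom.mk' (M.D X) (M.D_add X)).map_neg f

theorem nab_neg (X Y : V) : M.nab X (-Y) = -M.nab X Y :=
  (AddMonoidHom.mk' (M.nab X) (M.nab_add X)).map_neg Y

theorem g_neg_left (X Y : V) : M.g (-X) Y = -M.g X Y :=
  (AddMonoidHom.mk' (M.g · Y) (M.g_add · · Y)).map_neg X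

theorem g_neg_right (X Y : V) : M.g X (-Y) = -M.g X Y := by
  rw [M.g_symm, g_neg_left, M.g_symm]

theorem g_sub_right (X Y Z : V) : M.g X (Y - Z) = M.g X Y - M.g X Z := by
  simp only [M.g_symm X]
  exact (AddMonoidHom.mk' (M.g · X) (M.g_add · · X)).map_sub Y Z

theorem omega_neg (A : V → V) : M.omega (-A) = -M.omega A := by
  funext X Y
  exact M.g_neg_right X (A Y)

theorem nab2_neg (ψ : V → V → C) : M.nab2 (-ψ) = -M.nab2 ψ := by
  funext X Y Z
  simp only [nab2, Pi.neg_apply, D_neg]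
  ring

theorem d2_neg (ψ : V → V → C) : M.d2 (-ψ) = -M.d2 ψ := by
  funext X Y Z
  simp only [d2, Pi.neg_apply, D_neg]
  ring

theorem d2_eq_alternating_sum_nab2 {ψ : V → V → C}
    (add_left : ∀ X Y Z, ψ (X + Y) Z = ψ X Z + ψ Y Z) (skew : ∀ X Y, ψ X Y = -ψ Y X)
    (X Y Z : V) :
    M.d2 ψ X Y Z = M.nab2 ψ X Y Z - M.nab2 ψ Y X Z + M.nab2 ψ Z X Y := by
  have sub_left (X Y Z : V) : ψ (X - Y) Z = ψ X Z - ψ Y Z :=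
    (AddMonoidHom.mk' (ψ · Z) (add_left · · Z)).map_sub X Y
  simp only [d2, nab2, ← M.torsion_free, sub_left]
  linear_combination skew (M.nab X Z) Y - skew (M.nab Y Z) X + skew (M.nab Z Y) X

theorem nab2_omega_apply (A : V → V) (X Y Z : V) :
    M.nab2 (M.omega A) X Y Z = M.g Y (M.nabA A X Z) := by
  simp only [nab2, omega, nabA, M.nab_metric, g_sub_right]
  ring

theorem nab2_omega_neg_middle (A : V → V) (X Y Z : V) :
    M.nab2 (M.omega A) X (-Y) Z = -M.nab2 (M.omega A) X Y Z := by
  simp only [nab2_omega_apply, g_neg_left]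

theorem nab2_omega_comp {B : V → V} (skew : ∀ X Y, M.g (B X) Y = -M.g X (B Y)) (A : V → V)
    (X Y Z : V) :
    M.nab2 (M.omega (B ∘ A)) X Y Z
      = M.nab2 (M.omega B) X Y (A Z) - M.nab2 (M.omega A) X (B Y) Z := by
  simp only [nab2_omega_apply, nabA, g_sub_right, Function.comp_apply]
  linear_combination skew Y (M.nab X (A Z)) - skew Y (A (M.nab X Z))

/-- An almost complex structure compatible with the metric. Linearity is not recorded, as it is
automatic: `A` is skew-adjoint for the nondegenerate form `g`. -/
structure IsAlmostHermitian (A : V → V) : Prop where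
  sq : ∀ X, A (A X) = -X
  isometry : ∀ X Y, M.g (A X) (A Y) = M.g X Y

/-- An adapted basis `A, B, E` of the quaternionic structure: two anticommuting almost Hermitian
structures `A`, `B` and their composite `E = AB`. -/
structure IsAdaptedBasis (A B E : V → V) : Prop where
  first : M.IsAlmostHermitian A
  second : M.IsAlmostHermitian B
  third_apply : ∀ X, E X = A (B X)
  anticomm : ∀ X, A (B X) = -B (A X)

variable {M}

namespace IsAlmostHermitian

variable {A : V → V} (hA : M.IsAlmostHermitian A)
include hA

theorem map_neg (X : V) : A (-X) = -A X := by
  rw [← hA.sq X, hA.sq]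

theorem skew (X Y : V) : M.g (A X) Y = -M.g X (A Y) := by
  rw [← hA.isometry X (A Y), hA.sq, g_neg_right, neg_neg]

theorem d2_omega (X Y Z : V) :
    M.d2 (M.omega A) X Y Z
      = M.nab2 (M.omega A) X Y Z - M.nab2 (M.omega A) Y X Z + M.nab2 (M.omega A) Z X Y :=
  M.d2_eq_alternating_sum_nab2 (fun X Y Z => M.g_add X Y (A Z))
    (fun X Y => by rw [omega, omega, M.g_symm, hA.skew]) X Y Z

theorem nab2_omega_neg_right (X Y Z : V) :
    M.nab2 (M.omega A) X Y (-Z) = -M.nab2 (M.omega A) X Y Z := by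
  simp only [nab2_omega_apply, nabA, hA.map_neg, nab_neg, g_sub_right, g_neg_right]
  ring

theorem nab2_omega_apply_middle (X Y Z : V) :
    M.nab2 (M.omega A) X (A Y) Z = M.nab2 (M.omega A) X Y (A Z) := by
  simp only [nab2_omega_apply, nabA, g_sub_right]
  simp only [hA.skew, hA.sq, nab_neg, g_neg_right]
  ring

theorem nab2_omega_apply_apply (X Y Z : V) :
    M.nab2 (M.omega A) X (A Y) (A Z) = -M.nab2 (M.omega A) X Y Z := by
  rw [hA.nab2_omega_apply_middle, hA.sq, hA.nab2_omega_neg_right]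

end IsAlmostHermitian

namespace IsAdaptedBasis

variable {A B E : V → V} (h : M.IsAdaptedBasis A B E)
include h

theorem second_apply_first (X : V) : B (A X) = -A (B X) := by
  rw [h.anticomm, neg_neg]

theorem third : M.IsAlmostHermitian E where
  sq X := by
    rw [h.third_apply, h.third_apply, h.second_apply_first, h.second.sq, h.first.map_neg,
      h.first.sq, neg_neg]
  isometry X Y := by
    rw [h.third_apply, h.third_apply, h.first.isometry, h.second.isometry]

theorem second_apply_third (X : V) : B (E X) = A X := by
  rw [h.third_apply, h.second_apply_first, h.second.sq, h.first.map_neg, neg_neg]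

theorem rotate : M.IsAdaptedBasis B E A where
  first := h.second
  second := h.third
  third_apply X := (h.second_apply_third X).symm
  anticomm X := by
    rw [h.second_apply_third, h.third_apply, h.second.sq, h.first.map_neg, neg_neg]

theorem swap_neg : M.IsAdaptedBasis A E (-B) where
  first := h.first
  second := h.third
  third_apply X := by
    rw [h.third_apply, h.first.sq, Pi.neg_apply]
  anticomm X := by
    rw [h.third_apply, h.third_apply, h.second_apply_first, h.first.map_neg, neg_neg]

theorem nab2_omega_third (W Y Z : V) :
    M.nab2 (M.omega E) W Y Z
      = M.nab2 (M.omega A) W (B Y) Z - M.nab2 (M.omega B) W Y (A Z) := by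
  have third_eq : E = -(B ∘ A) := by
    funext X
    exact (h.third_apply X).trans (h.anticomm X)
  rw [third_eq, omega_neg, nab2_neg]
  simp only [Pi.neg_apply, M.nab2_omega_comp h.second.skew, neg_sub]

theorem nab2_omega_third_sub (W Y Z : V) :
    M.nab2 (M.omega E) W Y Z - M.nab2 (M.omega E) W (A Y) (A Z)
      = -M.nab2 (M.omega B) W (A Y) Z - M.nab2 (M.omega B) W Y (A Z) := by
  rw [h.nab2_omega_third, h.nab2_omega_third, h.second_apply_first, h.first.sq,
    h.second.nab2_omega_neg_right, nab2_omega_neg_middle, h.first.nab2_omega_apply_apply]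
  ring

theorem nab2_omega_third_apply_second (W X Y : V) :
    M.nab2 (M.omega E) W (B X) Y + M.nab2 (M.omega B) W (B X) (A Y)
      = -M.nab2 (M.omega A) W X Y := by
  rw [h.nab2_omega_third, h.second.sq, nab2_omega_neg_middle]
  ring

theorem two_nab2_omega_eq_op1_second :
    (2:ℝ) • M.nab2 (M.omega A)
      = (M.d2 (M.omega A) - op23 A (M.d2 (M.omega A)))
        + (op2 A (op1 B (M.d2 (M.omega B))) + op3 A (op1 B (M.d2 (M.omega B))))
        - (op1 B (M.d2 (M.omega E)) - op23 A (op1 B (M.d2 (M.omega E)))) := by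
  funext X Y Z
  have along_BX := h.nab2_omega_third_sub (B X) Y Z
  have along_Y := h.nab2_omega_third_apply_second Y X Z
  have along_Z := h.nab2_omega_third_apply_second Z X Y
  have along_AY := h.nab2_omega_third_apply_second (A Y) X (A Z)
  have along_AZ := h.nab2_omega_third_apply_second (A Z) X (A Y)
  rw [h.first.sq, h.second.nab2_omega_neg_right] at along_AY along_AZ
  simp only [two_smul, Pi.add_apply, Pi.sub_apply, op1, op2, op3, op23,
    h.first.d2_omega, h.second.d2_omega, h.third.d2_omega, h.first.nab2_omega_apply_apply]
  linear_combination -along_BX + along_Y - along_Z - along_AY + along_AZ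

theorem two_nab2_omega_eq_op1_third :
    (2:ℝ) • M.nab2 (M.omega A)
      = (M.d2 (M.omega A) - op23 A (M.d2 (M.omega A)))
        + (op2 A (op1 E (M.d2 (M.omega E))) + op3 A (op1 E (M.d2 (M.omega E))))
        + (op1 E (M.d2 (M.omega B)) - op23 A (op1 E (M.d2 (M.omega B)))) := by
  rw [h.swap_neg.two_nab2_omega_eq_op1_second, omega_neg, d2_neg]
  funext X Y Z
  simp only [Pi.add_apply, Pi.sub_apply, Pi.neg_apply, op1, op23]
  ring

end IsAdaptedBasis

variable (M) in
theorem isAdaptedBasis : M.IsAdaptedBasis M.I M.J M.K where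
  first := ⟨M.I_sq, M.I_metric⟩
  second := ⟨M.J_sq, M.J_metric⟩
  third_apply := M.K_def
  anticomm := M.anticomm

end

end AQH

open AQH in
/-- On an almost quaternion-Hermitian manifold, for any local
adapted basis `I, J, K`:
`2∇ω_I = (1 - I_(23)) dω_I + (I_(2) + I_(3)) J_(1) dω_J - (1 - I_(23)) J_(1) dω_K`
and
`2∇ω_I = (1 - I_(23)) dω_I + (I_(2) + I_(3)) K_(1) dω_K + (1 - I_(23)) K_(1) dω_J`,
together with the formulas obtained by cyclic permutation of `(I, J, K)`. -/
theorem statement2 {n : ℕ} {C V : Type*} [CommRing C] [Algebra ℝ C] [AddCommGroup V]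
    [Module C V] [Module ℝ V] [IsScalarTower ℝ C V] (M : AQH n C V) :
    -- formulas for ∇ω_I
    ((2:ℝ) • M.nab2 (M.omega M.I)
      = (M.d2 (M.omega M.I) - op23 M.I (M.d2 (M.omega M.I)))
        + (op2 M.I (op1 M.J (M.d2 (M.omega M.J))) + op3 M.I (op1 M.J (M.d2 (M.omega M.J))))
        - (op1 M.J (M.d2 (M.omega M.K)) - op23 M.I (op1 M.J (M.d2 (M.omega M.K))))) ∧
    ((2:ℝ) • M.nab2 (M.omega M.I)
      = (M.d2 (M.omega M.I) - op23 M.I (M.d2 (M.omega M.I)))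
        + (op2 M.I (op1 M.K (M.d2 (M.omega M.K))) + op3 M.I (op1 M.K (M.d2 (M.omega M.K))))
        + (op1 M.K (M.d2 (M.omega M.J)) - op23 M.I (op1 M.K (M.d2 (M.omega M.J))))) ∧
    -- formulas for ∇ω_J (cyclic permutation I → J → K → I)
    ((2:ℝ) • M.nab2 (M.omega M.J)
      = (M.d2 (M.omega M.J) - op23 M.J (M.d2 (M.omega M.J)))
        + (op2 M.J (op1 M.K (M.d2 (M.omega M.K))) + op3 M.J (op1 M.K (M.d2 (M.omega M.K))))
        - (op1 M.K (M.d2 (M.omega M.I)) - op23 M.J (op1 M.K (M.d2 (M.omega M.I))))) ∧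
    ((2:ℝ) • M.nab2 (M.omega M.J)
      = (M.d2 (M.omega M.J) - op23 M.J (M.d2 (M.omega M.J)))
        + (op2 M.J (op1 M.I (M.d2 (M.omega M.I))) + op3 M.J (op1 M.I (M.d2 (M.omega M.I))))
        + (op1 M.I (M.d2 (M.omega M.K)) - op23 M.J (op1 M.I (M.d2 (M.omega M.K))))) ∧
    -- formulas for ∇ω_K
    ((2:ℝ) • M.nab2 (M.omega M.K)
      = (M.d2 (M.omega M.K) - op23 M.K (M.d2 (M.omega M.K)))
        + (op2 M.K (op1 M.I (M.d2 (M.omega M.I))) + op3 M.K (op1 M.I (M.d2 (M.omega M.I))))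
        - (op1 M.I (M.d2 (M.omega M.J)) - op23 M.K (op1 M.I (M.d2 (M.omega M.J))))) ∧
    ((2:ℝ) • M.nab2 (M.omega M.K)
      = (M.d2 (M.omega M.K) - op23 M.K (M.d2 (M.omega M.K)))
        + (op2 M.K (op1 M.J (M.d2 (M.omega M.J))) + op3 M.K (op1 M.J (M.d2 (M.omega M.J))))
        + (op1 M.J (M.d2 (M.omega M.I)) - op23 M.K (op1 M.J (M.d2 (M.omega M.I))))) := by
  have hI : M.IsAdaptedBasis M.I M.J M.K := M.isAdaptedBasis
  have hJ : M.IsAdaptedBasis M.J M.K M.I := hI.rotate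
  have hK : M.IsAdaptedBasis M.K M.I M.J := hJ.rotate
  exact ⟨hI.two_nab2_omega_eq_op1_second, hI.two_nab2_omega_eq_op1_third,
    hJ.two_nab2_omega_eq_op1_second, hJ.two_nab2_omega_eq_op1_third,
    hK.two_nab2_omega_eq_op1_second, hK.two_nab2_omega_eq_op1_third⟩
end
end

section
/- On an almost quaternion-Hermitian manifold, for any local adapted basis I,J,K the Nijenhuis (0,3)-tensor of I is determined by the exterior derivatives of the Kähler forms of J and K: 2N_I = (I_{(12)} + I_{(13)} + I_{(23)} − 1) J_{(23)} (J dω_J − K dω_K) = (1 − I_{(12)}) (K_{(23)} − J_{(23)}) (J dω_J − K dω_K). In particular, if J dω_J = K dω_K then I is integrable. -/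
/-!  Synthetic (Koszul-style) model of an almost quaternion-Hermitian `4n`-manifold.

`C` plays the role of the commutative ℝ-algebra of smooth functions and `V` that of
the `C`-module of vector fields, equipped with a directional derivative `D`, a Lie
bracket, a Riemannian metric `g` together with its Levi-Civita connection `nab`
(characterised by being torsion-free and metric), a local adapted basis `I, J, K`
of anticommuting almost complex structures with `K = I J`, each compatible with the
metric, and a (local) orthonormal frame.  -/

noncomputable section

open scoped BigOperators

/-!
Write `P X = X + i I X` for the projection (up to a factor) onto vectors of type `(0,1)` for `I`.
The complex two-form `σ = ω_J + i ω_K` has type `(2,0)` for `I`, so it vanishes on every `P Y`, and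
Cartan's formula for `dσ (X, P Y, P Z)` reduces to its single term `-σ ([P Y, P Z], X)`, which equals
`-σ (N_I (Y, Z), X)` since `σ (I U, X) = i σ (U, X)`. Its real part at `J X` and its imaginary part
at `K X` both compute `N_I (X, Y, Z)`; their sum is the required expression for `2 N_I`.
-/

namespace AQH

section TwoForms

variable {C V : Type*} [CommRing C] [AddCommGroup V]

/-- Skew-symmetric biadditive forms, standing for two-forms. Linearity over functions is left
out, as the identities for `d2` and `nijV` only involve additivity. -/
structure IsTwoForm (ψ : V → V → C) : Prop where
  skew : ∀ X Y, ψ X Y = -ψ Y X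
  add_left : ∀ X Y Z, ψ (X + Y) Z = ψ X Z + ψ Y Z

namespace IsTwoForm

variable {ψ : V → V → C}

theorem neg_left (h : IsTwoForm ψ) (X Y : V) : ψ (-X) Y = -ψ X Y :=
  (AddMonoidHom.mk' (ψ · Y) fun X X' => h.add_left X X' Y).map_neg X

theorem neg_right (h : IsTwoForm ψ) (X Y : V) : ψ X (-Y) = -ψ X Y := by
  rw [h.skew, h.neg_left, h.skew X]

theorem sub_left (h : IsTwoForm ψ) (X Y Z : V) : ψ (X - Y) Z = ψ X Z - ψ Y Z := by
  rw [sub_eq_add_neg, h.add_left, h.neg_left, sub_eq_add_neg]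

theorem neg (h : IsTwoForm ψ) : IsTwoForm (-ψ) where
  skew X Y := congrArg Neg.neg (h.skew X Y)
  add_left X Y Z := by simp only [Pi.neg_apply, h.add_left, neg_add]

end IsTwoForm

/-- The two-form `α + i β` has type `(2,0)` with respect to `A`, that is,
`(α + i β) (A X, Y) = i (α + i β) (X, Y)`, written out in real and imaginary parts. -/
structure IsTwoZeroForm (A : V → V) (α β : V → V → C) : Prop where
  re : IsTwoForm α
  im : IsTwoForm β
  re_left : ∀ X Y, α (A X) Y = -β X Y
  im_left : ∀ X Y, β (A X) Y = α X Y

namespace IsTwoZeroForm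

variable {A : V → V} {α β : V → V → C}

theorem re_right (h : IsTwoZeroForm A α β) (X Y : V) : α X (A Y) = -β X Y := by
  rw [h.re.skew, h.re_left, h.im.skew X]

theorem im_right (h : IsTwoZeroForm A α β) (X Y : V) : β X (A Y) = α X Y := by
  rw [h.im.skew, h.im_left, h.re.skew X]

/-- Multiplication of `α + i β` by `-i`. -/
theorem neg_I_mul (h : IsTwoZeroForm A α β) : IsTwoZeroForm A β (-α) where
  re := h.im
  im := h.re.neg
  re_left X Y := by rw [h.im_left, Pi.neg_apply, Pi.neg_apply, neg_neg]
  im_left X Y := by rw [Pi.neg_apply, Pi.neg_apply, h.re_left, neg_neg]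

end IsTwoZeroForm

end TwoForms

variable {n : ℕ} {C V : Type*} [CommRing C] [Algebra ℝ C] [AddCommGroup V] [Module C V]
variable (M : AQH n C V)

section Derivations

theorem D_neg_left (X : V) (f : C) : M.D (-X) f = -M.D X f :=
  (AddMonoidHom.mk' (M.D · f) fun X Y => M.D_addX X Y f).map_neg X

theorem bracket_neg_right (X Y : V) : M.bracket X (-Y) = -M.bracket X Y :=
  (AddMonoidHom.mk' (M.bracket X) (M.bracket_add X)).map_neg Y

theorem bracket_neg_left (X Y : V) : M.bracket (-X) Y = -M.bracket X Y := by
  rw [M.bracket_skew, M.bracket_neg_right, M.bracket_skew X]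

end Derivations

section ExteriorDerivative

variable {ψ : V → V → C}

theorem d2_neg_fst (h : IsTwoForm ψ) (X Y Z : V) : M.d2 ψ (-X) Y Z = -M.d2 ψ X Y Z := by
  simp only [d2, M.D_neg_left, M.bracket_neg_left, h.neg_left, h.neg_right, M.D_neg]
  ring

theorem d2_neg_snd (h : IsTwoForm ψ) (X Y Z : V) : M.d2 ψ X (-Y) Z = -M.d2 ψ X Y Z := by
  simp only [d2, M.D_neg_left, M.bracket_neg_left, M.bracket_neg_right, h.neg_left, h.neg_right,
    M.D_neg]
  ring

theorem d2_neg_trd (h : IsTwoForm ψ) (X Y Z : V) : M.d2 ψ X Y (-Z) = -M.d2 ψ X Y Z := by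
  simp only [d2, M.D_neg_left, M.bracket_neg_right, h.neg_left, h.neg_right, M.D_neg]
  ring

/-- The left-hand side is the real part of `d(α + i β) (X, Y + i A Y, Z + i A Z)`. -/
theorem d2_re_of_isTwoZeroForm {A : V → V} {α β : V → V → C}
    (h : IsTwoZeroForm A α β) (X Y Z : V) :
    M.d2 α X Y Z - M.d2 α X (A Y) (A Z) - M.d2 β X (A Y) Z - M.d2 β X Y (A Z)
      = -α (M.nijV A Y Z) X := by
  have hnij : α (M.nijV A Y Z) X = α (M.bracket Y Z) X - β (M.bracket (A Y) Z) X
      - β (M.bracket Y (A Z)) X - α (M.bracket (A Y) (A Z)) X := by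
    simp only [nijV, h.re.sub_left, h.re.add_left, h.re_left]
    ring
  simp only [hnij, d2, h.re_left, h.re_right, h.im_left, h.im_right, M.D_neg]
  ring

theorem d2_im_of_isTwoZeroForm {A : V → V} {α β : V → V → C}
    (h : IsTwoZeroForm A α β) (X Y Z : V) :
    M.d2 β X Y Z - M.d2 β X (A Y) (A Z) + M.d2 α X (A Y) Z + M.d2 α X Y (A Z)
      = -β (M.nijV A Y Z) X := by
  simpa only [M.d2_neg, Pi.neg_apply, sub_neg_eq_add]
    using M.d2_re_of_isTwoZeroForm h.neg_I_mul X Y Z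

end ExteriorDerivative

section Metric

theorem eq_zero_of_forall_g_eq_zero {W : V} (h : ∀ X, M.g X W = 0) : W = 0 := by
  rw [M.frame_span W]
  simp only [M.g_symm W, h, zero_smul, Finset.sum_const_zero]

theorem isTwoForm_omega {A : V → V} (hA : ∀ X Y, M.g (A X) Y = -M.g X (A Y)) :
    IsTwoForm (M.omega A) where
  skew X Y := by rw [omega, omega, M.g_symm, hA]
  add_left X Y Z := M.g_add X Y (A Z)

end Metric

section AdaptedBasis

theorem I_neg (X : V) : M.I (-X) = -M.I X :=
  (AddMonoidHom.mk' M.I fun X Y => by simpa using M.I_lin 1 X Y).map_neg X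

theorem J_neg (X : V) : M.J (-X) = -M.J X :=
  (AddMonoidHom.mk' M.J fun X Y => by simpa using M.J_lin 1 X Y).map_neg X

theorem J_I (X : V) : M.J (M.I X) = -M.K X := by
  rw [M.K_def, M.anticomm, neg_neg]

theorem K_I (X : V) : M.K (M.I X) = M.J X := by
  rw [M.K_def, M.J_I, M.K_def, M.I_neg, M.I_sq, neg_neg]

theorem K_J (X : V) : M.K (M.J X) = -M.I X := by
  rw [M.K_def, M.J_sq, M.I_neg]

theorem J_K (X : V) : M.J (M.K X) = M.I X := by
  rw [M.K_def, M.J_I, M.K_J, neg_neg]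

theorem K_neg (X : V) : M.K (-X) = -M.K X := by
  simp only [M.K_def, M.J_neg, M.I_neg]

theorem K_sq (X : V) : M.K (M.K X) = -X := by
  rw [M.K_def X, M.K_I, M.J_sq]

theorem g_I_left (X Y : V) : M.g (M.I X) Y = -M.g X (M.I Y) := by
  rw [← M.I_metric X, M.I_sq, M.g_neg_right, neg_neg]

theorem g_J_left (X Y : V) : M.g (M.J X) Y = -M.g X (M.J Y) := by
  rw [← M.J_metric X, M.J_sq, M.g_neg_right, neg_neg]

theorem g_K_left (X Y : V) : M.g (M.K X) Y = -M.g X (M.K Y) := by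
  rw [M.K_def X, M.g_I_left, M.g_J_left, M.J_I, M.g_neg_right, neg_neg]

theorem isTwoForm_omega_J : IsTwoForm (M.omega M.J) := M.isTwoForm_omega M.g_J_left

theorem isTwoForm_omega_K : IsTwoForm (M.omega M.K) := M.isTwoForm_omega M.g_K_left

theorem isTwoZeroForm_omega_J_omega_K : IsTwoZeroForm M.I (M.omega M.J) (M.omega M.K) where
  re := M.isTwoForm_omega_J
  im := M.isTwoForm_omega_K
  re_left X Y := by rw [omega, omega, M.g_I_left, M.K_def]
  im_left X Y := by rw [omega, omega, M.g_I_left, M.K_def, M.I_sq, M.g_neg_right, neg_neg]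

/-- The tensor `J dω_J - K dω_K`, which determines `N_I`. -/
def twistedDerivDiff : V → V → V → C :=
  act3 M.J (M.d2 (M.omega M.J)) - act3 M.K (M.d2 (M.omega M.K))

theorem nij3_I_eq_re (X Y Z : V) :
    M.nij3 M.I X Y Z = M.d2 (M.omega M.J) (M.J X) Y Z
      - M.d2 (M.omega M.J) (M.J X) (M.I Y) (M.I Z)
      - M.d2 (M.omega M.K) (M.J X) (M.I Y) Z - M.d2 (M.omega M.K) (M.J X) Y (M.I Z) := by
  rw [M.d2_re_of_isTwoZeroForm M.isTwoZeroForm_omega_J_omega_K, omega, M.J_sq, M.g_neg_right,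
    neg_neg, nij3, M.g_symm]

theorem nij3_I_eq_im (X Y Z : V) :
    M.nij3 M.I X Y Z = M.d2 (M.omega M.K) (M.K X) Y Z
      - M.d2 (M.omega M.K) (M.K X) (M.I Y) (M.I Z)
      + M.d2 (M.omega M.J) (M.K X) (M.I Y) Z + M.d2 (M.omega M.J) (M.K X) Y (M.I Z) := by
  rw [M.d2_im_of_isTwoZeroForm M.isTwoZeroForm_omega_J_omega_K, omega, M.K_sq, M.g_neg_right,
    neg_neg, nij3, M.g_symm]

theorem op23_J_twistedDerivDiff (X Y Z : V) :
    op23 M.J M.twistedDerivDiff X Y Z =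
      M.d2 (M.omega M.K) (M.K X) (M.I Y) (M.I Z) - M.d2 (M.omega M.J) (M.J X) Y Z := by
  simp only [op23, twistedDerivDiff, act3, Pi.sub_apply, M.J_sq, M.K_J,
    M.d2_neg_snd M.isTwoForm_omega_J, M.d2_neg_trd M.isTwoForm_omega_J,
    M.d2_neg_snd M.isTwoForm_omega_K, M.d2_neg_trd M.isTwoForm_omega_K]
  ring

theorem op23_K_twistedDerivDiff (X Y Z : V) :
    op23 M.K M.twistedDerivDiff X Y Z =
      M.d2 (M.omega M.K) (M.K X) Y Z - M.d2 (M.omega M.J) (M.J X) (M.I Y) (M.I Z) := by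
  simp only [op23, twistedDerivDiff, act3, Pi.sub_apply, M.K_sq, M.J_K,
    M.d2_neg_snd M.isTwoForm_omega_K, M.d2_neg_trd M.isTwoForm_omega_K]
  ring

theorem two_smul_nij3_I_eq_op12_sub :
    (2 : ℝ) • M.nij3 M.I
      = (op23 M.K M.twistedDerivDiff - op23 M.J M.twistedDerivDiff)
        - op12 M.I (op23 M.K M.twistedDerivDiff - op23 M.J M.twistedDerivDiff) := by
  funext X Y Z
  simp only [op12, Pi.sub_apply, Pi.smul_apply, two_smul, M.op23_J_twistedDerivDiff,
    M.op23_K_twistedDerivDiff, M.J_I, M.K_I, M.I_sq, M.d2_neg_fst M.isTwoForm_omega_J,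
    M.d2_neg_snd M.isTwoForm_omega_J, M.d2_neg_snd M.isTwoForm_omega_K]
  linear_combination M.nij3_I_eq_re X Y Z + M.nij3_I_eq_im X Y Z

/-- `I_(13) J_(23) = -I_(12) K_(23)` and `I_(23) J_(23) = K_(23)` on tensors odd in the last two
arguments. -/
theorem op12_add_op13_add_op23_sub_op23_J {T : V → V → V → C}
    (hsnd : ∀ X Y Z, T X (-Y) Z = -T X Y Z) (htrd : ∀ X Y Z, T X Y (-Z) = -T X Y Z) :
    (op12 M.I (op23 M.J T) + op13 M.I (op23 M.J T) + op23 M.I (op23 M.J T)) - op23 M.J T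
      = (op23 M.K T - op23 M.J T) - op12 M.I (op23 M.K T - op23 M.J T) := by
  funext X Y Z
  simp only [op12, op13, op23, Pi.add_apply, Pi.sub_apply, M.J_I, M.K_I, hsnd, htrd]
  ring

theorem twistedDerivDiff_neg_snd (X Y Z : V) :
    M.twistedDerivDiff X (-Y) Z = -M.twistedDerivDiff X Y Z := by
  simp only [twistedDerivDiff, act3, Pi.sub_apply, M.J_neg, M.K_neg,
    M.d2_neg_snd M.isTwoForm_omega_J, M.d2_neg_snd M.isTwoForm_omega_K]
  ring

theorem twistedDerivDiff_neg_trd (X Y Z : V) :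
    M.twistedDerivDiff X Y (-Z) = -M.twistedDerivDiff X Y Z := by
  simp only [twistedDerivDiff, act3, Pi.sub_apply, M.J_neg, M.K_neg,
    M.d2_neg_trd M.isTwoForm_omega_J, M.d2_neg_trd M.isTwoForm_omega_K]
  ring

theorem nijV_I_eq_zero_of_twistedDerivDiff_eq_zero (h : M.twistedDerivDiff = 0) (X Y : V) :
    M.nijV M.I X Y = 0 := by
  have hnij : (2 : ℝ) • M.nij3 M.I = 0 := by
    rw [M.two_smul_nij3_I_eq_op12_sub, h]
    funext X Y Z
    simp only [op12, op23, Pi.sub_apply, Pi.zero_apply, sub_zero]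
  rw [smul_eq_zero_iff_right two_ne_zero] at hnij
  exact M.eq_zero_of_forall_g_eq_zero fun W => congrFun₃ hnij W X Y

end AdaptedBasis

end AQH

open AQH in
/-- On an almost quaternion-Hermitian manifold, for any local
adapted basis `I, J, K`, the Nijenhuis `(0,3)`-tensor of `I` satisfies
`2 N_I = (I_(12) + I_(13) + I_(23) - 1) J_(23) (J dω_J - K dω_K)
       = (1 - I_(12)) (K_(23) - J_(23)) (J dω_J - K dω_K)`.
In particular, `J dω_J = K dω_K` implies that `I` is integrable. -/
theorem statement3 {n : ℕ} {C V : Type*} [CommRing C] [Algebra ℝ C] [AddCommGroup V]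
    [Module C V] [Module ℝ V] [IsScalarTower ℝ C V] (M : AQH n C V) :
    ((2:ℝ) • M.nij3 M.I
      = (op12 M.I (op23 M.J (act3 M.J (M.d2 (M.omega M.J)) - act3 M.K (M.d2 (M.omega M.K))))
          + op13 M.I (op23 M.J (act3 M.J (M.d2 (M.omega M.J)) - act3 M.K (M.d2 (M.omega M.K))))
          + op23 M.I (op23 M.J (act3 M.J (M.d2 (M.omega M.J)) - act3 M.K (M.d2 (M.omega M.K)))))
        - op23 M.J (act3 M.J (M.d2 (M.omega M.J)) - act3 M.K (M.d2 (M.omega M.K)))) ∧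
    ((2:ℝ) • M.nij3 M.I
      = (op23 M.K (act3 M.J (M.d2 (M.omega M.J)) - act3 M.K (M.d2 (M.omega M.K)))
          - op23 M.J (act3 M.J (M.d2 (M.omega M.J)) - act3 M.K (M.d2 (M.omega M.K))))
        - op12 M.I (op23 M.K (act3 M.J (M.d2 (M.omega M.J)) - act3 M.K (M.d2 (M.omega M.K)))
          - op23 M.J (act3 M.J (M.d2 (M.omega M.J)) - act3 M.K (M.d2 (M.omega M.K))))) ∧
    (act3 M.J (M.d2 (M.omega M.J)) = act3 M.K (M.d2 (M.omega M.K)) →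
      ∀ X Y, M.nijV M.I X Y = 0) := by
  have hop := M.op12_add_op13_add_op23_sub_op23_J M.twistedDerivDiff_neg_snd
    M.twistedDerivDiff_neg_trd
  exact ⟨M.two_smul_nij3_I_eq_op12_sub.trans hop.symm, M.two_smul_nij3_I_eq_op12_sub,
    fun h => M.nijV_I_eq_zero_of_twistedDerivDiff_eq_zero (sub_eq_zero.mpr h)⟩
end
end
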